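/- arXiv:2410.05895 — 2 statements merged into one kernel-verified Lean document; each statement's English description precedes it below -/
import Mathlib

section
/- For every nonnegative integer n, the 2n-th moment of the hyperbolic secant random variable satisfies (1/π) ∫_{-∞}^{∞} x^{2n} / cosh x dx = (-1)^n (π/2)^{2n} E_{2n}, where E_m denotes the m-th Euler number. -/
/-!
The moments and the Euler numbers satisfy the same recurrence. For `N = 2n ≥ 2`, the Leibniz rule
applied to `cosh * sech = 1` gives `∑ i, C(N, i) cosh⁽ⁱ⁾(0) E_{N-i} = 0` (`euler_recurrence`), where
only even `i` contribute. On the other side, `z ^ N / sinh z` is holomorphic in the strip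
`|Im z| < π`, the singularity at `0` being removable, and it decays at infinity; since
`sinh (x ± iπ/2) = ± i cosh x`, comparing its integrals over the lines `Im z = ±π/2` gives
`∫ ((x + iπ/2) ^ N + (x - iπ/2) ^ N) / cosh x dx = 0` (`contour_identity`). Expanding by the binomial
theorem yields the recurrence above for the moments divided by `π (iπ/2) ^ k`
(`moment_recurrence`). The initial value `∫ 1 / cosh = π` comes from the antiderivative
`arctan (sinh x)`, and strong induction (`moment_eq_euler`) concludes.
-/


open Real MeasureTheory

/-- The `n`-th Euler number, defined as the `n`-th iterated derivative at `0` of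
`x ↦ sech x = 1 / cosh x`, i.e. via `sech x = ∑ E_n xⁿ/n!`. -/
noncomputable def eulerNumber (n : ℕ) : ℝ :=
  iteratedDeriv n (fun x : ℝ => 1 / Real.cosh x) 0

/-- Domination by a multiple of the Cauchy density, from `|x|^k + |x|^(k+2) ≤ (k! + (k+2)!) exp |x|`. -/
theorem exists_pow_div_cosh_le (k : ℕ) :
    ∃ C : ℝ, ∀ x : ℝ, ‖x ^ k / Real.cosh x‖ ≤ C * (1 + x ^ 2)⁻¹ := by
  refine ⟨2 * (k.factorial + (k + 2).factorial), fun x => ?_⟩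
  have h1 := Real.pow_div_factorial_le_exp |x| (abs_nonneg x) k
  have h2 := Real.pow_div_factorial_le_exp |x| (abs_nonneg x) (k + 2)
  rw [div_le_iff₀ (by positivity)] at h1 h2
  have h3 : Real.exp |x| ≤ 2 * Real.cosh x := by
    rw [← Real.cosh_abs, Real.cosh_eq]
    linarith [Real.exp_pos (-|x|)]
  have hc := Real.cosh_pos x
  rw [norm_div, norm_pow, Real.norm_eq_abs, Real.norm_of_nonneg hc.le, ← div_eq_mul_inv,
    div_le_div_iff₀ hc (by positivity)]
  have h4 : |x| ^ (k + 2) = |x| ^ k * x ^ 2 := by rw [pow_add, sq_abs]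
  calc |x| ^ k * (1 + x ^ 2) = |x| ^ k + |x| ^ (k + 2) := by rw [h4]; ring
    _ ≤ Real.exp |x| * (k.factorial + (k + 2).factorial) := by linarith
    _ ≤ 2 * Real.cosh x * (k.factorial + (k + 2).factorial) := by gcongr
    _ = _ := by ring

theorem integrable_pow_div_cosh (k : ℕ) :
    Integrable (fun x : ℝ => x ^ k / Real.cosh x) := by
  obtain ⟨C, hC⟩ := exists_pow_div_cosh_le k
  refine (integrable_inv_one_add_sq.const_mul C).mono' ?_ (Filter.Eventually.of_forall hC)
  exact ((continuous_id.pow k).div Real.continuous_cosh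
    fun x => (Real.cosh_pos x).ne').aestronglyMeasurable

/-- The case `n = 0`: an antiderivative of `1 / cosh` is `arctan ∘ sinh`. -/
theorem integral_one_div_cosh : ∫ x : ℝ, 1 / Real.cosh x = π := by
  have hd : ∀ x : ℝ, HasDerivAt (fun x => Real.arctan (Real.sinh x)) (1 / Real.cosh x) x := by
    intro x
    convert (Real.hasDerivAt_sinh x).arctan using 1
    have := (Real.cosh_pos x).ne'
    rw [add_comm, ← Real.cosh_sq]
    field_simp
  rw [integral_of_hasDerivAt_of_tendsto hd (by simpa using integrable_pow_div_cosh 0)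
    ((tendsto_nhds_of_tendsto_nhdsWithin Real.tendsto_arctan_atBot).comp
      Real.sinhOrderIso.tendsto_atBot)
    ((tendsto_nhds_of_tendsto_nhdsWithin Real.tendsto_arctan_atTop).comp
      Real.sinhOrderIso.tendsto_atTop)]
  ring

/-- The recurrence of the Euler numbers: the Leibniz rule applied to `cosh * (1 / cosh) = 1` at `0`. -/
theorem euler_recurrence {n : ℕ} (hn : n ≠ 0) :
    ∑ i ∈ Finset.range (n + 1), (n.choose i : ℝ) * iteratedDeriv i Real.cosh 0
      * eulerNumber (n - i) = 0 := by
  have hs : ContDiff ℝ n (fun x : ℝ => 1 / Real.cosh x) :=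
    contDiff_const.div Real.contDiff_cosh fun x => (Real.cosh_pos x).ne'
  have h := iteratedDeriv_mul (x := (0 : ℝ)) (n := n) Real.contDiff_cosh.contDiffAt hs.contDiffAt
  have h1 : (Real.cosh * fun x : ℝ => 1 / Real.cosh x) = fun _ => 1 := by
    ext x
    simp [(Real.cosh_pos x).ne']
  rw [h1] at h
  simp only [eulerNumber]
  rw [← h]
  simp [iteratedDeriv_const, hn]

/-- The numbers `cosh⁽ⁱ⁾(0)` (equal to `1` for even `i` and `0` for odd `i`) are the factors that
remain when the binomial expansions of `(x + a) ^ N` and `(x - a) ^ N` are added. -/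
theorem iteratedDeriv_cosh_zero (i : ℕ) (a : ℂ) :
    a ^ i + (-a) ^ i = 2 * (iteratedDeriv i Real.cosh 0 : ℝ) * a ^ i := by
  rcases Nat.even_or_odd' i with ⟨j, rfl | rfl⟩
  · simp [pow_mul]; ring
  · simp [pow_succ, pow_mul]

theorem abs_sinh_re_le (x y : ℝ) : |Real.sinh x| ≤ ‖Complex.sinh (x + y * Complex.I)‖ := by
  rw [← Real.sqrt_sq_eq_abs, Complex.norm_def]
  apply Real.sqrt_le_sqrt
  rw [Complex.sinh_add, Complex.sinh_mul_I, Complex.cosh_mul_I, Complex.normSq_apply]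
  have h1 : (Complex.sinh x * Complex.cos y + Complex.cosh x * (Complex.sin y * Complex.I))
      = ((Real.sinh x * Real.cos y : ℝ) : ℂ) + (Real.cosh x * Real.sin y : ℝ) * Complex.I := by
    push_cast; ring
  rw [h1, ← Complex.mk_eq_add_mul_I]
  nlinarith [Real.cosh_sq x, Real.sin_sq_add_cos_sq y, sq_nonneg (Real.sin y)]

/-- In the strip `|Im z| < π` the only zero of `sinh` is `0`. -/
theorem complex_sinh_ne_zero {z : ℂ} (hz : z ≠ 0) (h : |z.im| < π) : Complex.sinh z ≠ 0 := by
  intro h0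
  apply hz
  have hre : z.re = 0 := by
    have := abs_sinh_re_le z.re z.im
    rwa [Complex.re_add_im, h0, norm_zero, abs_nonpos_iff, Real.sinh_eq_zero] at this
  have h1 : z = z.im * Complex.I := by
    apply Complex.ext <;> simp [hre]
  rw [h1, Complex.sinh_mul_I, ← Complex.ofReal_sin, mul_eq_zero, or_iff_left Complex.I_ne_zero,
    Complex.ofReal_eq_zero, Real.sin_eq_zero_iff_of_lt_of_lt (abs_lt.1 h).1 (abs_lt.1 h).2] at h0
  exact Complex.ext hre h0

theorem tendsto_pow_div_sinh (k : ℕ) :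
    Filter.Tendsto (fun R : ℝ => (R + 2) ^ k / Real.sinh R) Filter.atTop (nhds 0) := by
  have h1 := ((Real.tendsto_pow_mul_exp_neg_atTop_nhds_zero k).comp
    (Filter.tendsto_atTop_add_const_right Filter.atTop (2 : ℝ) Filter.tendsto_id)).const_mul
      (4 * Real.exp 2)
  rw [mul_zero] at h1
  refine squeeze_zero' ?_ ?_ h1
  · filter_upwards [Filter.eventually_ge_atTop 0] with R hR
    have := Real.sinh_nonneg_iff.2 hR
    positivity
  · filter_upwards [Filter.eventually_ge_atTop 1] with R hR
    -- `exp R ≥ 2 ≥ 2 * exp (-R)` as soon as `R ≥ 1`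
    have h2 : Real.exp R / 4 ≤ Real.sinh R := by
      have h3 := Real.add_one_le_exp R
      have h4 : Real.exp (-R) ≤ 1 := Real.exp_le_one_iff.2 (by linarith)
      rw [Real.sinh_eq]
      linarith
    simp only [Function.comp, id]
    calc (R + 2) ^ k / Real.sinh R ≤ (R + 2) ^ k / (Real.exp R / 4) := by gcongr
      _ = _ := by
        rw [neg_add, Real.exp_add, Real.exp_neg R, Real.exp_neg 2]
        field_simp

/-- The function `z ^ (2m+2) / sinh z`, with its removable singularity at `0` removed:
`dslope sinh 0` is the entire function equal to `sinh z / z` off `0` and to `1` at `0`. -/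
noncomputable def kernelFun (m : ℕ) (z : ℂ) : ℂ :=
  z ^ (2 * m + 1) / dslope Complex.sinh 0 z

theorem kernelFun_of_ne_zero (m : ℕ) {z : ℂ} (hz : z ≠ 0) :
    kernelFun m z = z ^ (2 * m + 2) / Complex.sinh z := by
  rw [kernelFun, dslope_of_ne _ hz, slope_def_field, Complex.sinh_zero, sub_zero, sub_zero]
  rw [div_div_eq_mul_div, ← pow_succ]

theorem kernelFun_differentiableAt (m : ℕ) {z : ℂ} (h : |z.im| < π) :
    DifferentiableAt ℂ (kernelFun m) z := by
  have hd : Differentiable ℂ (dslope Complex.sinh 0) := by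
    rw [← differentiableOn_univ, Complex.differentiableOn_dslope Filter.univ_mem]
    exact Complex.differentiable_sinh.differentiableOn
  refine (differentiableAt_id.pow _).div (hd z) ?_
  rcases eq_or_ne z 0 with rfl | hz
  · simp [dslope_same]
  · rw [dslope_of_ne _ hz, slope_def_field]
    simpa [hz] using complex_sinh_ne_zero hz h

/-- The bound that makes the vertical sides `|Re z| = R` of the contour negligible. -/
theorem norm_kernelFun_le (m : ℕ) {R : ℝ} (hR : 0 < R) (x y : ℝ) (hx : |x| = R)
    (hy : |y| ≤ π / 2) :
    ‖kernelFun m (x + y * Complex.I)‖ ≤ (R + 2) ^ (2 * m + 2) / Real.sinh R := by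
  have hz : (x + y * Complex.I : ℂ) ≠ 0 := by
    intro h
    have := congrArg Complex.re h
    simp at this
    simp [this] at hx
    linarith
  have h1 : ‖(x + y * Complex.I : ℂ)‖ ≤ R + 2 := by
    refine (norm_add_le _ _).trans ?_
    simp only [norm_mul, Complex.norm_I, Complex.norm_real, Real.norm_eq_abs, hx]
    linarith [Real.pi_le_four]
  have h2 := abs_sinh_re_le x y
  rw [Real.abs_sinh, hx] at h2
  have h3 := Real.sinh_pos_iff.2 hR
  rw [kernelFun_of_ne_zero m hz, norm_div, norm_pow]
  gcongr

/-- On the line `Im z = π/2`, `sinh z = i cosh (Re z)`. -/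
theorem kernelFun_add (m : ℕ) (x : ℝ) :
    kernelFun m (x + (π / 2 : ℝ) * Complex.I) =
      -Complex.I * ((x + (π / 2 : ℝ) * Complex.I) ^ (2 * m + 2) / Real.cosh x) := by
  have hz : (x + (π / 2 : ℝ) * Complex.I : ℂ) ≠ 0 := by
    intro h
    have := congrArg Complex.im h
    simp [Real.pi_ne_zero] at this
  rw [kernelFun_of_ne_zero m hz, Complex.sinh_add, Complex.sinh_mul_I, Complex.cosh_mul_I,
    ← Complex.ofReal_sin, ← Complex.ofReal_cos, Real.sin_pi_div_two, Real.cos_pi_div_two]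
  simp [div_eq_mul_inv]
  ring

/-- On the line `Im z = -π/2`, `sinh z = -i cosh (Re z)`. -/
theorem kernelFun_sub (m : ℕ) (x : ℝ) :
    kernelFun m (x + (-(π / 2) : ℝ) * Complex.I) =
      Complex.I * ((x + (-(π / 2) : ℝ) * Complex.I) ^ (2 * m + 2) / Real.cosh x) := by
  have hz : (x + (-(π / 2) : ℝ) * Complex.I : ℂ) ≠ 0 := by
    intro h
    have := congrArg Complex.im h
    simp [Real.pi_ne_zero] at this
  rw [kernelFun_of_ne_zero m hz, Complex.sinh_add, Complex.sinh_mul_I, Complex.cosh_mul_I,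
    ← Complex.ofReal_sin, ← Complex.ofReal_cos, Real.sin_neg, Real.cos_neg,
    Real.sin_pi_div_two, Real.cos_pi_div_two]
  simp [div_eq_mul_inv]
  ring

theorem integrable_complex_pow_div_cosh (k : ℕ) :
    Integrable (fun x : ℝ => (x : ℂ) ^ k / Real.cosh x) := by
  have := (integrable_pow_div_cosh k).ofReal (𝕜 := ℂ)
  simpa using this

theorem add_pow_div_cosh (a : ℂ) (N : ℕ) (x : ℝ) :
    (x + a) ^ N / (Real.cosh x : ℂ) =
      ∑ i ∈ Finset.range (N + 1), (N.choose i * a ^ i) * ((x : ℂ) ^ (N - i) / Real.cosh x) := by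
  rw [add_comm, add_pow, Finset.sum_div]
  exact Finset.sum_congr rfl fun i _ => by ring

theorem integrable_add_pow_div_cosh (a : ℂ) (N : ℕ) :
    Integrable (fun x : ℝ => (x + a) ^ N / (Real.cosh x : ℂ)) := by
  simp_rw [add_pow_div_cosh]
  exact integrable_finsetSum _ fun i _ => (integrable_complex_pow_div_cosh _).const_mul _

theorem integral_add_pow_div_cosh (a : ℂ) (N : ℕ) :
    ∫ x : ℝ, (x + a) ^ N / (Real.cosh x : ℂ) =
      ∑ i ∈ Finset.range (N + 1), (N.choose i * a ^ i) *
        ∫ x : ℝ, (x : ℂ) ^ (N - i) / (Real.cosh x : ℂ) := by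
  simp_rw [add_pow_div_cosh]
  rw [integral_finsetSum _ fun i _ => (integrable_complex_pow_div_cosh _).const_mul _]
  simp_rw [integral_const_mul]

/-- Cauchy's theorem for `kernelFun m` on the rectangles `[-R, R] × [-π/2, π/2]`, as `R → ∞`. -/
theorem contour_identity (m : ℕ) :
    (∫ x : ℝ, (x + (π / 2 : ℝ) * Complex.I) ^ (2 * m + 2) / (Real.cosh x : ℂ)) +
      ∫ x : ℝ, (x + (-(π / 2) : ℝ) * Complex.I) ^ (2 * m + 2) / (Real.cosh x : ℂ) = 0 := by
  have hpi := Real.pi_pos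
  -- the contour integral over the boundary of the rectangle with vertices `±R ± iπ/2` vanishes
  have hrect : ∀ R : ℝ,
      (∫ x : ℝ in -R..R, kernelFun m (x + (-(π / 2) : ℝ) * Complex.I)) -
        (∫ x : ℝ in -R..R, kernelFun m (x + (π / 2 : ℝ) * Complex.I)) =
      Complex.I * (∫ y : ℝ in -(π / 2)..(π / 2), kernelFun m ((-R : ℝ) + y * Complex.I)) -
      Complex.I * (∫ y : ℝ in -(π / 2)..(π / 2), kernelFun m (R + y * Complex.I)) := by
    intro R
    have h := Complex.integral_boundary_rect_eq_zero_of_differentiableOn (kernelFun m)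
      ⟨-R, -(π / 2)⟩ ⟨R, π / 2⟩ (fun z hz => by
        have him := hz.2
        simp only [Set.mem_preimage] at him
        rw [Set.uIcc_of_le (by linarith)] at him
        refine (kernelFun_differentiableAt m ?_).differentiableWithinAt
        rw [abs_lt]
        constructor <;> linarith [him.1, him.2])
    simp only [smul_eq_mul] at h
    linear_combination h
  -- the sides `Re z = s * R` with `s = ±1`
  have hvert : ∀ s : ℝ, |s| = 1 → Filter.Tendsto (fun R : ℝ =>
      ∫ y : ℝ in -(π / 2)..(π / 2), kernelFun m ((s * R : ℝ) + y * Complex.I))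
      Filter.atTop (nhds 0) := by
    intro s hs
    have hlim := (tendsto_pow_div_sinh (2 * m + 2)).mul_const (|π / 2 - -(π / 2)|)
    rw [zero_mul] at hlim
    refine squeeze_zero_norm' ?_ hlim
    filter_upwards [Filter.eventually_gt_atTop 0] with R hR
    refine intervalIntegral.norm_integral_le_of_norm_le_const fun y hy => ?_
    rw [Set.uIoc_of_le (by linarith)] at hy
    exact norm_kernelFun_le m hR _ y (by rw [abs_mul, hs, one_mul, abs_of_pos hR])
      (abs_le.2 ⟨hy.1.le, hy.2⟩)
  have hR := ((hvert (-1) (by simp)).const_mul Complex.I).sub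
    ((hvert 1 (by simp)).const_mul Complex.I)
  simp only [neg_one_mul, one_mul, mul_zero, sub_zero, ← hrect] at hR
  simp_rw [kernelFun_add, kernelFun_sub] at hR
  have hL := (intervalIntegral_tendsto_integral
      ((integrable_add_pow_div_cosh ((-(π / 2) : ℝ) * Complex.I) (2 * m + 2)).const_mul
        Complex.I) Filter.tendsto_neg_atTop_atBot Filter.tendsto_id).sub
    (intervalIntegral_tendsto_integral
      ((integrable_add_pow_div_cosh ((π / 2 : ℝ) * Complex.I) (2 * m + 2)).const_mul
        (-Complex.I)) Filter.tendsto_neg_atTop_atBot Filter.tendsto_id)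
  have h := tendsto_nhds_unique hL hR
  rw [integral_const_mul, integral_const_mul] at h
  apply mul_left_cancel₀ Complex.I_ne_zero
  linear_combination h

/-- The moments of `1 / cosh`, rescaled by powers of `iπ/2`, satisfy the recurrence
`euler_recurrence` of the Euler numbers. -/
theorem moment_recurrence (m : ℕ) :
    ∑ i ∈ Finset.range (2 * m + 2 + 1), ((2 * m + 2).choose i : ℂ)
      * (iteratedDeriv i Real.cosh 0 : ℝ) * ((π / 2 : ℝ) * Complex.I) ^ i
      * ∫ x : ℝ, (x : ℂ) ^ (2 * m + 2 - i) / (Real.cosh x : ℂ) = 0 := by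
  have h := contour_identity m
  rw [integral_add_pow_div_cosh, integral_add_pow_div_cosh, ← Finset.sum_add_distrib] at h
  apply mul_left_cancel₀ (two_ne_zero' ℂ)
  rw [mul_zero, ← h, Finset.mul_sum]
  refine Finset.sum_congr rfl fun i _ => ?_
  have h2 := iteratedDeriv_cosh_zero i ((π / 2 : ℝ) * Complex.I)
  rw [Complex.ofReal_neg, neg_mul]
  linear_combination -((2 * m + 2).choose i : ℂ) *
    (∫ x : ℝ, (x : ℂ) ^ (2 * m + 2 - i) / (Real.cosh x : ℂ)) * h2

/-- Complex form of the result. Both sides satisfy the same recurrence, which expresses the term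
of index `2n` through those of smaller even index. -/
theorem moment_eq_euler (n : ℕ) :
    ∫ x : ℝ, (x : ℂ) ^ (2 * n) / (Real.cosh x : ℂ) =
      π * ((π / 2 : ℝ) * Complex.I) ^ (2 * n) * eulerNumber (2 * n) := by
  induction n using Nat.strong_induction_on with
  | _ n ih =>
  rcases n with _ | m
  · have h : (∫ x : ℝ, ((1 / Real.cosh x : ℝ) : ℂ)) = π := by
      rw [integral_complex_ofReal, integral_one_div_cosh]
    simpa [eulerNumber] using h
  have h1 := moment_recurrence m
  have h2 := congrArg (fun r : ℝ => (r : ℂ)) (euler_recurrence (n := 2 * m + 2) (by omega))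
  simp only [Complex.ofReal_sum, Complex.ofReal_mul, Complex.ofReal_natCast,
    Complex.ofReal_zero] at h2
  rw [Finset.sum_range_succ'] at h1 h2
  have h3 : ∑ i ∈ Finset.range (2 * m + 2), ((2 * m + 2).choose (i + 1) : ℂ)
      * (iteratedDeriv (i + 1) Real.cosh 0 : ℝ) * ((π / 2 : ℝ) * Complex.I) ^ (i + 1)
      * (∫ x : ℝ, (x : ℂ) ^ (2 * m + 2 - (i + 1)) / (Real.cosh x : ℂ)) =
      π * ((π / 2 : ℝ) * Complex.I) ^ (2 * m + 2) *
      ∑ i ∈ Finset.range (2 * m + 2), ((2 * m + 2).choose (i + 1) : ℂ)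
      * (iteratedDeriv (i + 1) Real.cosh 0 : ℝ) * (eulerNumber (2 * m + 2 - (i + 1)) : ℂ) := by
    rw [Finset.mul_sum]
    refine Finset.sum_congr rfl fun i hi => ?_
    rw [Finset.mem_range] at hi
    rcases Nat.even_or_odd' (i + 1) with ⟨j, hj | hj⟩
    · have hj' : 2 * m + 2 - (i + 1) = 2 * (m + 1 - j) := by omega
      have hp : ((π / 2 : ℝ) * Complex.I) ^ (2 * m + 2) =
          ((π / 2 : ℝ) * Complex.I) ^ (i + 1) * ((π / 2 : ℝ) * Complex.I) ^ (2 * (m + 1 - j)) := by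
        rw [← pow_add]; congr 1; omega
      rw [hj', ih (m + 1 - j) (by omega), hp]
      ring
    -- odd indices do not contribute, since the odd derivatives of `cosh` vanish at `0`
    · simp [hj]
  rw [h3] at h1
  simp only [Nat.choose_zero_right, Nat.cast_one, iteratedDeriv_zero, Real.cosh_zero,
    Complex.ofReal_one, pow_zero, mul_one, one_mul, Nat.sub_zero] at h1 h2
  rw [show 2 * (m + 1) = 2 * m + 2 by ring]
  linear_combination h1 - (π * ((π / 2 : ℝ) * Complex.I) ^ (2 * m + 2)) * h2

/-- The even moments of the hyperbolic secant random variable: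
`(1/π) ∫ x^{2n} / cosh x dx = (-1)^n (π/2)^{2n} E_{2n}`. -/
theorem even_moment_hyperbolic_secant (n : ℕ) :
    (1 / π) * ∫ x : ℝ, x ^ (2 * n) / Real.cosh x
      = (-1) ^ n * (π / 2) ^ (2 * n) * eulerNumber (2 * n) := by
  have h := moment_eq_euler n
  have h1 : (∫ x : ℝ, (x : ℂ) ^ (2 * n) / (Real.cosh x : ℂ)) =
      ((∫ x : ℝ, x ^ (2 * n) / Real.cosh x : ℝ) : ℂ) := by
    rw [← integral_complex_ofReal]
    simp
  rw [h1, mul_pow, pow_mul Complex.I, Complex.I_sq] at h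
  have h2 : ∫ x : ℝ, x ^ (2 * n) / Real.cosh x
      = π * ((π / 2) ^ (2 * n) * (-1) ^ n) * eulerNumber (2 * n) := by
    exact_mod_cast h
  rw [h2]
  have := Real.pi_ne_zero
  field_simp
end

section
/- For every positive integer n, ζ(2n+1, 1/4) + 2^{2n} (1 - 2^{2n+1}) ζ(2n+1) = (-1)^n (E_{2n} / (2 (2n)!)) π^{2n+1} 2^{2n}, where ζ(s, a) is the Hurwitz zeta function, ζ(s) is the Riemann zeta function, and E_m denotes the m-th Euler number. -/
/-!
Write `β(s) = ∑ (-1)^m / (2m+1)^s` and `s = 2n+1`. Splitting indices modulo `4`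
(`tsum_four_mul_add_one`),
`ζ(s, 1/4) = 4^s ∑ 1/(4m+1)^s = (4^s / 2) ((1 - 2^{-s}) ζ(s) + β(s))`,
so the zeta term in the theorem cancels and its left-hand side equals `(4^s / 2) β(s)`.

The value of `β(2n+1)` comes from the Fourier series of the Bernoulli polynomial `B_{2n+1}` at
`1/4`, where `sin (2π k / 4)` is the odd character modulo `4` (`hasSum_sin`). It remains to prove
`B_{2n+1}(1/4) = -(2n+1) E_{2n} / 4^{2n+1}` (`bernoulliFun_quarter`). This is a comparison of formal
power series: the generating function of Bernoulli polynomials gives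
`∑ (B_k(1/4) - B_k(3/4)) (4X)^k / k! = 4X (e^X - e^{3X}) / (e^{4X} - 1) = -2X sech X`,
and `B_k(3/4) = -B_k(1/4)` for odd `k`. The Maclaurin series of `sech`, defined by iterated
derivatives, is identified through the Leibniz rule (`maclaurin_mul`).
-/

open Real

namespace HurwitzQuarter

open PowerSeries

/-- The formal Maclaurin series of a real function, built from its iterated derivatives at `0`. -/
noncomputable def maclaurin (f : ℝ → ℝ) : PowerSeries ℝ :=
  PowerSeries.mk fun n => iteratedDeriv n f 0 / (n.factorial : ℝ)

/-- The formal exponential series `e^{aX}`. -/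
noncomputable def expSeries (a : ℝ) : PowerSeries ℝ := rescale a (PowerSeries.exp ℝ)

lemma expSeries_mul (a b : ℝ) : expSeries a * expSeries b = expSeries (a + b) :=
  exp_mul_exp_eq_exp_add a b

lemma coeff_expSeries (a : ℝ) (n : ℕ) :
    coeff n (expSeries a) = a ^ n / (n.factorial : ℝ) := by
  simp [expSeries, coeff_rescale, coeff_exp, div_eq_mul_inv]

lemma expSeries_zero : expSeries 0 = 1 := by
  simp [expSeries]

lemma maclaurin_mul {f g : ℝ → ℝ} (hf : ∀ n : ℕ, ContDiffAt ℝ n f 0)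
    (hg : ∀ n : ℕ, ContDiffAt ℝ n g 0) :
    maclaurin (f * g) = maclaurin f * maclaurin g := by
  ext n
  rw [maclaurin, coeff_mk, iteratedDeriv_mul (hf n) (hg n), PowerSeries.coeff_mul,
    Finset.Nat.sum_antidiagonal_eq_sum_range_succ_mk, Finset.sum_div]
  refine Finset.sum_congr rfl fun i hi => ?_
  rw [Nat.cast_choose ℝ (Nat.lt_succ_iff.mp (Finset.mem_range.mp hi))]
  simp only [maclaurin, coeff_mk]
  have h := Nat.factorial_ne_zero
  field_simp [h]

lemma maclaurin_exp (a : ℝ) : maclaurin (fun x => Real.exp (a * x)) = expSeries a := by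
  ext n
  rw [coeff_expSeries, maclaurin, coeff_mk, iteratedDeriv_exp_const_mul]
  simp

/-- The formal identity `sech(X) (e^X + e^{-X}) = 2`, multiplied by `e^X`. -/
lemma maclaurin_sech_mul :
    maclaurin (fun x => 1 / Real.cosh x) * (expSeries 2 + 1) = 2 * expSeries 1 := by
  have hs : ∀ n : ℕ, ContDiffAt ℝ n (fun x : ℝ => 1 / Real.cosh x) 0 := fun n =>
    contDiffAt_const.div Real.contDiff_cosh.contDiffAt (Real.cosh_pos 0).ne'
  have he : ∀ (a : ℝ) (n : ℕ), ContDiffAt ℝ n (fun x : ℝ => Real.exp (a * x)) 0 := fun a n => by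
    fun_prop
  have hadd : maclaurin (fun x => Real.exp (2 * x) + Real.exp (0 * x)) = expSeries 2 + 1 := by
    rw [← expSeries_zero, ← maclaurin_exp, ← maclaurin_exp]
    ext n
    simp only [maclaurin, coeff_mk, map_add]
    rw [iteratedDeriv_fun_add (he 2 n) (he 0 n), add_div]
  rw [← hadd, ← maclaurin_mul hs fun n => (he 2 n).add (he 0 n)]
  have hf : ((fun x => 1 / Real.cosh x) * fun x => Real.exp (2 * x) + Real.exp (0 * x))
      = fun x : ℝ => 2 * Real.exp (1 * x) := by
    funext x
    have hp : Real.exp (2 * x) = Real.exp x * Real.exp x := by rw [← Real.exp_add]; ring_nf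
    have hn : Real.exp x * Real.exp (-x) = 1 := by rw [← Real.exp_add]; simp
    have hc := (Real.cosh_pos x).ne'
    simp only [Pi.mul_apply, zero_mul, Real.exp_zero, one_mul]
    rw [div_mul_eq_mul_div, div_eq_iff hc, Real.cosh_eq, hp]
    linear_combination -hn
  rw [hf, ← maclaurin_exp]
  ext n
  have h2 : (2 : PowerSeries ℝ) = C (2 : ℝ) := (map_ofNat C 2).symm
  rw [h2, coeff_C_mul]
  simp only [maclaurin, coeff_mk]
  rw [iteratedDeriv_const_mul_field, mul_div_assoc]

/-- The generating series `∑ Bₙ(t) (4X)ⁿ / n!` of Bernoulli polynomials, at scale `4`. -/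
noncomputable def bernoulliSeries (t : ℝ) : PowerSeries ℝ :=
  PowerSeries.mk fun n => 4 ^ n * bernoulliFun n t / (n.factorial : ℝ)

lemma bernoulliSeries_mul (t : ℝ) :
    bernoulliSeries t * (expSeries 4 - 1) = C 4 * X * expSeries (4 * t) := by
  have h := congrArg (rescale (4 : ℝ)) (Polynomial.bernoulli_generating_function t)
  rw [map_mul, map_mul, map_sub, map_one, rescale_X, rescale_rescale] at h
  rw [mul_comm t 4] at h
  have hB : bernoulliSeries t = rescale (4 : ℝ) (PowerSeries.mk fun n =>
      Polynomial.aeval t ((1 / (n.factorial : ℚ)) • Polynomial.bernoulli n)) := by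
    ext n
    rw [bernoulliSeries, coeff_mk, coeff_rescale, coeff_mk, map_smul, bernoulliFun,
      Polynomial.eval_map_algebraMap, Algebra.smul_def]
    simp
    ring
  rw [hB]
  exact h

/-- `∑ (Bₙ(1/4) - Bₙ(3/4)) (4X)ⁿ/n! = -2X sech X`. Both sides are quotients by `e^{2X} + 1`, since
`(e^X - e^{3X}) / (e^{4X} - 1) = -e^X / (e^{2X} + 1)`. -/
lemma bernoulliSeries_sub :
    bernoulliSeries (1 / 4) - bernoulliSeries (3 / 4)
      = -(C 2 * X * maclaurin (fun x => 1 / Real.cosh x)) := by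
  have h1 := bernoulliSeries_mul (1 / 4)
  have h3 := bernoulliSeries_mul (3 / 4)
  have hS := maclaurin_sech_mul
  norm_num only at h1 h3
  have e4 : expSeries 4 = expSeries 2 * expSeries 2 := by rw [expSeries_mul]; norm_num
  have e3 : expSeries 3 = expSeries 1 * expSeries 2 := by rw [expSeries_mul]; norm_num
  rw [e4] at h1 h3
  rw [e3] at h3
  have n1 : expSeries 2 - 1 ≠ 0 := fun h => by
    have := congrArg (coeff 1) h
    simp [coeff_expSeries, coeff_one] at this
  have n2 : expSeries 2 + 1 ≠ 0 := fun h => by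
    have := congrArg (coeff 1) h
    simp [coeff_expSeries, coeff_one] at this
  have hC : (C (4 : ℝ) : PowerSeries ℝ) = 2 * C 2 := by
    rw [show (4 : ℝ) = 2 * 2 by norm_num, map_mul, map_ofNat C 2]
  rw [hC] at h1 h3
  apply mul_right_cancel₀ (mul_ne_zero n1 n2)
  linear_combination h1 - h3 + (C 2 * X * (expSeries 2 - 1)) * hS

/-- `B_{2n+1}(1/4) = -(2n+1) E_{2n} / 4^{2n+1}`. -/
lemma bernoulliFun_quarter (n : ℕ) :
    bernoulliFun (2 * n + 1) (1 / 4) / ((2 * n + 1).factorial : ℝ)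
      = -(eulerNumber (2 * n) / ((2 * n).factorial : ℝ)) / 4 ^ (2 * n + 1) := by
  have h := congrArg (coeff (2 * n + 1)) bernoulliSeries_sub
  have hsymm : bernoulliFun (2 * n + 1) (3 / 4) = -bernoulliFun (2 * n + 1) (1 / 4) := by
    rw [show (3 / 4 : ℝ) = 1 - 1 / 4 by norm_num, bernoulliFun_eval_one_sub,
      Odd.neg_one_pow ⟨n, rfl⟩]
    ring
  rw [map_sub, map_neg, mul_assoc, coeff_C_mul, coeff_succ_X_mul] at h
  simp only [bernoulliSeries, maclaurin, coeff_mk, hsymm] at h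
  rw [eq_div_iff (by positivity), eulerNumber]
  linear_combination h / 2

/-- Closed form for the Dirichlet beta value `∑ (-1)^m / (2m+1)^{2n+1}`, as the Fourier series of
`B_{2n+1}` at `1/4`: `sin (π k / 2)` is the nontrivial character modulo `4`. -/
lemma hasSum_sin (n : ℕ) (hn : n ≠ 0) :
    HasSum (fun k : ℕ => 1 / (k : ℝ) ^ (2 * n + 1) * Real.sin (2 * π * k * (1 / 4)))
      ((-1) ^ n * (eulerNumber (2 * n) / ((2 * n).factorial : ℝ)) * π ^ (2 * n + 1)
        / (4 * 4 ^ n)) := by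
  have h := hasSum_one_div_nat_pow_mul_sin hn (x := 1 / 4) (by constructor <;> norm_num)
  convert h using 1
  have hb := bernoulliFun_quarter n
  rw [bernoulliFun] at hb
  rw [div_mul_eq_mul_div, mul_div_assoc _ (Polynomial.eval _ _), hb]
  rw [pow_succ (-1 : ℝ), mul_pow, show (4 : ℝ) ^ (2 * n + 1) = 2 ^ (2 * n + 1) * (2 * 4 ^ n) by
    rw [show (4 : ℝ) = 2 * 2 by norm_num, mul_pow, mul_pow]; ring]
  field_simp
  ring

/-- On odd `k`, the indicator of `k ≡ 1 (mod 4)` is the average of `1` and `sin (π k / 2)`; so twice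
the sum over `4m + 1` is the odd part of `∑ a k` plus its twist by `sin (π k / 2)`. -/
lemma tsum_four_mul_add_one {a : ℕ → ℝ} (ha : Summable a) :
    2 * ∑' m, a (4 * m + 1) = (∑' k, a k - ∑' k, a (2 * k))
      + ∑' k : ℕ, a k * Real.sin (2 * π * k * (1 / 4)) := by
  have inj : ∀ (c d : ℕ), c ≠ 0 → Function.Injective fun m : ℕ => c * m + d := by
    intro c d hc x y h
    simpa [hc] using h
  have hs : ∀ c d : ℕ, c ≠ 0 → Summable fun m : ℕ => a (c * m + d) := fun c d hc =>
    ha.comp_injective (inj c d hc)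
  have h1 : ∑' k, a (2 * k) + ∑' k, a (2 * k + 1) = ∑' k, a k :=
    tsum_even_add_odd (hs 2 0 two_ne_zero) (hs 2 1 two_ne_zero)
  have e1 : ∀ m : ℕ, 2 * (2 * m) + 1 = 4 * m + 1 := fun m => by ring
  have e3 : ∀ m : ℕ, 2 * (2 * m + 1) + 1 = 4 * m + 3 := fun m => by ring
  have h2 : ∑' k, a (4 * k + 1) + ∑' k, a (4 * k + 3) = ∑' k, a (2 * k + 1) := by
    have := tsum_even_add_odd (f := fun k => a (2 * k + 1))
      (by simpa only [e1] using hs 4 1 four_ne_zero)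
      (by simpa only [e3] using hs 4 3 four_ne_zero)
    simpa only [e1, e3] using this
  have sin0 : ∀ m : ℕ, Real.sin (2 * π * ((2 * m : ℕ) : ℝ) * (1 / 4)) = 0 := fun m => by
    rw [← Real.sin_nat_mul_pi m]; congr 1; push_cast; ring
  have sin1 : ∀ m : ℕ, Real.sin (2 * π * ((4 * m + 1 : ℕ) : ℝ) * (1 / 4)) = 1 := fun m => by
    rw [show 2 * π * ((4 * m + 1 : ℕ) : ℝ) * (1 / 4) = π / 2 + m * (2 * π) by push_cast; ring,
      Real.sin_add_nat_mul_two_pi, Real.sin_pi_div_two]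
  have sin3 : ∀ m : ℕ, Real.sin (2 * π * ((4 * m + 3 : ℕ) : ℝ) * (1 / 4)) = -1 := fun m => by
    rw [show 2 * π * ((4 * m + 3 : ℕ) : ℝ) * (1 / 4) = -(π / 2) + (m + 1 : ℕ) * (2 * π) by
        push_cast; ring,
      Real.sin_add_nat_mul_two_pi, Real.sin_neg, Real.sin_pi_div_two]
  have h3 : ∑' k, a (4 * k + 1) - ∑' k, a (4 * k + 3)
      = ∑' k : ℕ, a k * Real.sin (2 * π * k * (1 / 4)) := by
    have t1 : HasSum (fun m : ℕ => a (4 * m + 1)) (∑' k, a (4 * k + 1)) :=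
      (hs 4 1 four_ne_zero).hasSum
    have t3 : HasSum (fun m : ℕ => -a (4 * m + 3)) (-∑' k, a (4 * k + 3)) :=
      (hs 4 3 four_ne_zero).hasSum.neg
    have todd : HasSum (fun k : ℕ => a (2 * k + 1) *
        Real.sin (2 * π * ((2 * k + 1 : ℕ) : ℝ) * (1 / 4)))
        (∑' k, a (4 * k + 1) + -∑' k, a (4 * k + 3)) := by
      apply HasSum.even_add_odd
      · simpa only [e1, sin1, mul_one] using t1
      · simpa only [e3, sin3, mul_neg, mul_one] using t3
    have teven : HasSum (fun k : ℕ => a (2 * k) *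
        Real.sin (2 * π * ((2 * k : ℕ) : ℝ) * (1 / 4))) 0 := by
      simpa only [sin0, mul_zero] using hasSum_zero
    have := HasSum.even_add_odd
      (f := fun k : ℕ => a k * Real.sin (2 * π * k * (1 / 4))) teven todd
    rw [this.tsum_eq]; ring
  linarith

lemma hurwitzZeta_quarter (s : ℕ) (hs : 1 < s) :
    HurwitzZeta.hurwitzZeta ((1 / 4 : ℝ) : UnitAddCircle) (s : ℂ)
      = ((4 ^ s * ∑' m : ℕ, 1 / ((4 * m + 1 : ℕ) : ℝ) ^ s : ℝ) : ℂ) := by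
  have h := HurwitzZeta.hasSum_hurwitzZeta_of_one_lt_re (a := 1 / 4) (s := (s : ℂ))
    (by constructor <;> norm_num) (by simpa using hs)
  rw [← h.tsum_eq, ← tsum_mul_left, Complex.ofReal_tsum]
  congr 1 with m
  rw [Complex.cpow_natCast]
  have h0 : (4 * (m : ℂ) + 1) ≠ 0 := by exact_mod_cast Nat.succ_ne_zero (4 * m)
  have hm : (m : ℂ) + ((1 / 4 : ℝ) : ℂ) = (4 * m + 1) / 4 := by push_cast; ring
  rw [hm, div_pow]
  push_cast
  field_simp

lemma riemannZeta_eq_ofReal (s : ℕ) (hs : 1 < s) :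
    riemannZeta (s : ℂ) = ((∑' k : ℕ, 1 / (k : ℝ) ^ s : ℝ) : ℂ) := by
  rw [zeta_nat_eq_tsum_of_gt_one hs, Complex.ofReal_tsum]
  push_cast
  rfl

end HurwitzQuarter

open HurwitzQuarter in
/-- For `n ≥ 1`,
`ζ(2n+1, 1/4) + 2^{2n}(1 - 2^{2n+1}) ζ(2n+1) = (-1)^n (E_{2n}/(2(2n)!)) π^{2n+1} 2^{2n}`. -/
theorem hurwitz_zeta_quarter_identity (n : ℕ) (hn : 1 ≤ n) :
    HurwitzZeta.hurwitzZeta ((1 / 4 : ℝ) : UnitAddCircle) (2 * n + 1)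
        + 2 ^ (2 * n) * (1 - 2 ^ (2 * n + 1)) * riemannZeta (2 * n + 1)
      = (-1) ^ n * ((eulerNumber (2 * n) : ℂ) / (2 * (Nat.factorial (2 * n) : ℂ))) * (π : ℂ) ^ (2 * n + 1) *
          2 ^ (2 * n) := by
  have hs : 1 < 2 * n + 1 := by omega
  have hcast : (2 * n + 1 : ℂ) = ((2 * n + 1 : ℕ) : ℂ) := by push_cast; rfl
  rw [hcast, hurwitzZeta_quarter _ hs, riemannZeta_eq_ofReal _ hs]
  have hsum : Summable fun k : ℕ => 1 / (k : ℝ) ^ (2 * n + 1) :=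
    Real.summable_one_div_nat_pow.mpr hs
  have hsplit := tsum_four_mul_add_one hsum
  rw [(hasSum_sin n (by omega)).tsum_eq] at hsplit
  have heven : ∑' k : ℕ, 1 / ((2 * k : ℕ) : ℝ) ^ (2 * n + 1)
      = (1 / 2 ^ (2 * n + 1)) * ∑' k : ℕ, 1 / (k : ℝ) ^ (2 * n + 1) := by
    rw [← tsum_mul_left]
    congr 1 with k
    push_cast
    rw [mul_pow, one_div_mul_one_div]
  rw [heven] at hsplit
  generalize (∑' k : ℕ, 1 / (k : ℝ) ^ (2 * n + 1)) = Z at *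
  generalize (∑' m : ℕ, 1 / ((4 * m + 1 : ℕ) : ℝ) ^ (2 * n + 1)) = P at *
  have hP : P = ((Z - 1 / 2 ^ (2 * n + 1) * Z) + (-1) ^ n *
      (eulerNumber (2 * n) / ((2 * n).factorial : ℝ)) * π ^ (2 * n + 1) / (4 * 4 ^ n)) / 2 := by
    linarith
  have key : 4 ^ (2 * n + 1) * P + 2 ^ (2 * n) * (1 - 2 ^ (2 * n + 1)) * Z
      = (-1) ^ n * (eulerNumber (2 * n) / (2 * ((2 * n).factorial : ℝ))) * π ^ (2 * n + 1)
        * 2 ^ (2 * n) := by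
    have h4 : (4 : ℝ) ^ (2 * n + 1) = 4 * (2 ^ (2 * n)) ^ 2 := by
      rw [show (4 : ℝ) = 2 ^ 2 by norm_num, ← pow_mul, ← pow_mul]; ring
    have h4' : (4 : ℝ) ^ n = 2 ^ (2 * n) := by
      rw [show (4 : ℝ) = 2 ^ 2 by norm_num, ← pow_mul]
    rw [hP, h4, h4', pow_succ (2 : ℝ)]
    have hf : ((2 * n).factorial : ℝ) ≠ 0 := by positivity
    have h2 : (2 : ℝ) ^ (2 * n) ≠ 0 := by positivity
    generalize (2 : ℝ) ^ (2 * n) = w at *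
    field_simp
    ring
  exact_mod_cast congrArg (fun x : ℝ => (x : ℂ)) key
end
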